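/- arXiv:1007.3313 — 6 statements merged into one kernel-verified Lean document; each statement's English description precedes it below -/
import Mathlib

section
/- Let E be a real inner product space and F : E → E a continuous linear map that is skew-adjoint, i.e. ⟨F x, y⟩ = -⟨x, F y⟩ for all x, y ∈ E. Let s be a natural number, β₀, …, β_s real numbers (with the convention β_j = 0 for j > s), and define S_ℓ = Σ_{j=0}^{2ℓ} (-1)^{ℓ+j} β_j β_{2ℓ-j} for 0 ≤ ℓ ≤ s. Then for every θ ∈ E and every real number t, ‖Σ_{i=0}^{s} β_i t^i F^i θ‖² = Σ_{ℓ=0}^{s} S_ℓ t^{2ℓ} ‖F^ℓ θ‖². -/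
open RealInnerProductSpace Finset

/-!
The adjoint of `F` being `-F`, the adjoint of `p(F)` is `p(-F)`, so
`⟪p(F) x, p(F) x⟫ = ⟪x, p(-F) p(F) x⟫`. The polynomial `p(-X) p(X)` is even, say `r(X²)` (this is
one step of Graeffe's root-squaring method), hence the right-hand side is `⟪x, r(F²) x⟫`. Finally
`⟪x, F²ˡ x⟫ = (-1)ˡ ⟪Fˡ x, Fˡ x⟫`, and these signs turn the coefficients of `r` into the stability
coefficients of `p`.
-/

section

open Polynomial

section Ring

variable {R : Type*} [Ring R]

/-- The stability coefficients `S_ℓ` of a scheme with coefficients `β`. The subtraction `2 * ℓ - j`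
never truncates, as `j ≤ 2 * ℓ`. -/
def stabilityCoeff (β : ℕ → R) (ℓ : ℕ) : R :=
  ∑ j ∈ range (2 * ℓ + 1), (-1) ^ (ℓ + j) * β j * β (2 * ℓ - j)

theorem coeff_comp_neg_X (p : R[X]) (n : ℕ) : (p.comp (-X)).coeff n = (-1) ^ n * p.coeff n := by
  rw [show (-X : R[X]) = C (-1) * X by simp, comp_C_mul_X_coeff,
    ((Commute.neg_one_right (p.coeff n)).pow_right n).eq]

theorem coeff_comp_neg_X_mul_self (p : R[X]) (n : ℕ) :
    (p.comp (-X) * p).coeff n =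
      ∑ ij ∈ antidiagonal n, (-1) ^ ij.1 * p.coeff ij.1 * p.coeff ij.2 := by
  simp only [coeff_mul, coeff_comp_neg_X]

end Ring

section Graeffe

variable {R : Type*} [CommRing R]

/-- The Graeffe transform of `p`: the polynomial `r` with `r(X²) = p(-X) p(X)`. -/
noncomputable def graeffe (p : R[X]) : R[X] :=
  contract 2 (p.comp (-X) * p)

theorem coeff_comp_neg_X_mul_self_of_odd (p : R[X]) {n : ℕ} (hn : Odd n) :
    (p.comp (-X) * p).coeff n = 0 := by
  rw [coeff_comp_neg_X_mul_self]
  -- For odd `n`, swapping `(i, j)` has no fixed point and reverses the sign.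
  refine sum_involution (fun ij _ ↦ ij.swap) ?_ ?_
    (fun _ hij ↦ HasAntidiagonal.swap_mem_antidiagonal.2 hij) (fun ij _ ↦ ij.swap_swap)
  · rintro ⟨i, j⟩ hij
    have odd_add : Odd (i + j) := HasAntidiagonal.mem_antidiagonal.1 hij ▸ hn
    have sign_swap : (-1 : R) ^ j = -(-1) ^ i := by
      rcases Nat.even_or_odd j with hj | hj
      · rw [hj.neg_one_pow, (Nat.odd_add.1 odd_add |>.2 hj).neg_one_pow, neg_neg]
      · rw [hj.neg_one_pow, (Nat.odd_add'.1 odd_add |>.1 hj).neg_one_pow]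
    simp only [Prod.swap_prod_mk, sign_swap]
    ring
  · rintro ⟨i, j⟩ hij - hswap
    have odd_add : Odd (i + j) := HasAntidiagonal.mem_antidiagonal.1 hij ▸ hn
    obtain rfl : j = i := congrArg Prod.fst hswap
    exact Nat.not_odd_iff_even.2 (Even.add_self j) odd_add

theorem expand_graeffe (p : R[X]) : expand R 2 (graeffe p) = p.comp (-X) * p := by
  ext n
  rw [coeff_expand two_pos, graeffe, coeff_contract two_ne_zero]
  split_ifs with hn
  · rw [Nat.div_mul_cancel hn]
  · rw [coeff_comp_neg_X_mul_self_of_odd p (Nat.odd_iff.2 (Nat.two_dvd_ne_zero.1 hn))]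

theorem coeff_graeffe (p : R[X]) (ℓ : ℕ) :
    (graeffe p).coeff ℓ = (-1) ^ ℓ * stabilityCoeff p.coeff ℓ := by
  rw [graeffe, coeff_contract two_ne_zero, mul_comm ℓ, coeff_comp_neg_X_mul_self,
    Nat.sum_antidiagonal_eq_sum_range_succ fun i j ↦ (-1) ^ i * p.coeff i * p.coeff j,
    stabilityCoeff, mul_sum]
  refine sum_congr rfl fun j _ ↦ ?_
  have sign_mul : (-1 : R) ^ ℓ * (-1) ^ (ℓ + j) = (-1) ^ j := by
    rw [← pow_add, ← add_assoc, pow_add, (Even.add_self ℓ).neg_one_pow, one_mul]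
  simp only [← mul_assoc, sign_mul]

theorem natDegree_graeffe_le (p : R[X]) : (graeffe p).natDegree ≤ p.natDegree := by
  refine natDegree_le_iff_coeff_eq_zero.2 fun ℓ hℓ ↦ ?_
  rw [graeffe, coeff_contract two_ne_zero]
  have natDegree_comp_le : (p.comp (-X)).natDegree ≤ p.natDegree :=
    natDegree_le_iff_coeff_eq_zero.2 fun n hn ↦ by
      rw [coeff_comp_neg_X, coeff_eq_zero_of_natDegree_lt hn, mul_zero]
  exact coeff_eq_zero_of_natDegree_lt (natDegree_mul_le.trans_lt (by lia))

end Graeffe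

section AdjointPair

variable {R M N : Type*} [CommSemiring R] [AddCommMonoid M] [Module R M] [AddCommMonoid N]
  [Module R N] {B : M →ₗ[R] M →ₗ[R] N} {f g : Module.End R M}

theorem isAdjointPair_pow (h : B.IsAdjointPair B f g) (n : ℕ) :
    B.IsAdjointPair B (f ^ n : Module.End R M) (g ^ n : Module.End R M) := by
  induction n with
  | zero => exact LinearMap.isAdjointPair_one
  | succ n ih =>
    rw [pow_succ, pow_succ']
    exact ih.mul h

theorem isAdjointPair_aeval (h : B.IsAdjointPair B f g) (p : R[X]) :
    B.IsAdjointPair B (aeval f p) (aeval g p) := by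
  induction p using Polynomial.induction_on' with
  | add p q hp hq =>
    rw [map_add, map_add]
    exact hp.add hq
  | monomial n a =>
    intro x y
    simp [aeval_monomial, isAdjointPair_pow h n x y]

end AdjointPair

section SkewAdjoint

variable {R M N : Type*} [CommRing R] [AddCommGroup M] [Module R M] [AddCommGroup N] [Module R N]
  {B : M →ₗ[R] M →ₗ[R] N} {F : Module.End R M}

theorem apply_pow_apply_pow_of_isSkewAdjoint (hF : B.IsSkewAdjoint F) (ℓ : ℕ) (x : M) :
    B ((F ^ ℓ) x) ((F ^ ℓ) x) = (-1 : R) ^ ℓ • B x (((F ^ 2) ^ ℓ) x) := by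
  rw [isAdjointPair_pow (g := -F) hF, ← Module.End.mul_apply, ← (Commute.refl F).neg_left.mul_pow,
    neg_mul, ← sq, ← neg_one_smul R (F ^ 2), _root_.smul_pow, LinearMap.smul_apply, map_smul]

theorem apply_aeval_apply_aeval_of_isSkewAdjoint (hF : B.IsSkewAdjoint F) (p : R[X]) (x : M) :
    B (aeval F p x) (aeval F p x) = B x (aeval (F ^ 2) (graeffe p) x) := by
  rw [isAdjointPair_aeval (g := -F) hF, ← expand_aeval, expand_graeffe, map_mul, aeval_comp,
    map_neg, aeval_X, Module.End.mul_apply]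

theorem apply_aeval_apply_aeval_eq_sum_stabilityCoeff (hF : B.IsSkewAdjoint F) {p : R[X]} {s : ℕ}
    (hp : p.natDegree ≤ s) (x : M) :
    B (aeval F p x) (aeval F p x) =
      ∑ ℓ ∈ range (s + 1), stabilityCoeff p.coeff ℓ • B ((F ^ ℓ) x) ((F ^ ℓ) x) := by
  have hdeg : (graeffe p).natDegree < s + 1 :=
    Nat.lt_succ_of_le ((natDegree_graeffe_le p).trans hp)
  simp only [apply_aeval_apply_aeval_of_isSkewAdjoint hF, aeval_eq_sum_range' hdeg, coeff_graeffe,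
    LinearMap.sum_apply, LinearMap.smul_apply, map_sum, map_smul,
    apply_pow_apply_pow_of_isSkewAdjoint hF, smul_smul, mul_comm]

theorem skew_adjoint_scheme_energy_general (hF : B.IsSkewAdjoint F) (s : ℕ) (β : ℕ → R)
    (hβ : ∀ j, s < j → β j = 0) (x : M) (t : R) :
    B (∑ i ∈ range (s + 1), (β i * t ^ i) • (F ^ i) x)
        (∑ i ∈ range (s + 1), (β i * t ^ i) • (F ^ i) x) =
      ∑ ℓ ∈ range (s + 1), (stabilityCoeff β ℓ * t ^ (2 * ℓ)) • B ((F ^ ℓ) x) ((F ^ ℓ) x) := by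
  let p : R[X] := ∑ i ∈ range (s + 1), monomial i (β i)
  have coeff_p : p.coeff = β := by
    funext j
    simp only [p, finsetSum_coeff, coeff_monomial, sum_ite_eq', mem_range]
    exact ite_eq_left_iff.2 fun hj ↦ (hβ j (by lia)).symm
  have hp : p.natDegree ≤ s := natDegree_le_iff_coeff_eq_zero.2 fun j hj ↦ by
    rw [coeff_p, hβ j hj]
  have htF : B.IsSkewAdjoint (t • F : Module.End R M) := by
    rw [← LinearMap.mem_skewAdjointSubmodule] at hF ⊢
    exact Submodule.smul_mem _ t hF
  have aeval_p : aeval (t • F) p x = ∑ i ∈ range (s + 1), (β i * t ^ i) • (F ^ i) x := by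
    simp [p, aeval_monomial, _root_.smul_pow, smul_smul, mul_comm]
  have energy := apply_aeval_apply_aeval_eq_sum_stabilityCoeff (F := t • F) htF hp x
  simpa [coeff_p, aeval_p, _root_.smul_pow, smul_smul, two_mul, pow_add, mul_assoc] using energy

end SkewAdjoint

end

/-- For a skew-adjoint continuous linear map `F` and coefficients `β₀,…,β_s` (with `β_j = 0`
for `j > s`), the squared norm of `∑ βᵢ tⁱ Fⁱ θ` is `∑ S_ℓ t^{2ℓ} ‖F^ℓ θ‖²` where
`S_ℓ = ∑_{j=0}^{2ℓ} (-1)^{ℓ+j} β_j β_{2ℓ-j}`. -/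
theorem skew_adjoint_scheme_energy
    {E : Type*} [NormedAddCommGroup E] [InnerProductSpace ℝ E]
    (F : E →L[ℝ] E) (hF : ∀ x y : E, ⟪F x, y⟫ = -⟪x, F y⟫)
    (s : ℕ) (β : ℕ → ℝ) (hβ : ∀ j, s < j → β j = 0)
    (S : ℕ → ℝ)
    (hS : ∀ ℓ, S ℓ = ∑ j ∈ range (2 * ℓ + 1), (-1 : ℝ) ^ (ℓ + j) * β j * β (2 * ℓ - j))
    (θ : E) (t : ℝ) :
    ‖∑ i ∈ range (s + 1), (β i * t ^ i) • (F ^ i) θ‖ ^ 2 =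
      ∑ ℓ ∈ range (s + 1), S ℓ * t ^ (2 * ℓ) * ‖(F ^ ℓ) θ‖ ^ 2 := by
  simp only [hS, ← real_inner_self_eq_norm_sq, ← ContinuousLinearMap.coe_coe,
    ContinuousLinearMap.toLinearMap_pow]
  exact skew_adjoint_scheme_energy_general (B := innerₗ E)
    (fun x y ↦ (hF x y).trans (inner_neg_right x (F y)).symm) s β hβ θ t
end

section
/- Let E be a real inner product space and F : E → E a continuous linear map that is skew-adjoint, i.e. ⟨F x, y⟩ = -⟨x, F y⟩ for all x, y ∈ E. Then for every θ ∈ E and real t, the order-two Runge–Kutta step satisfies the exact energy identity ‖θ + t F θ + (t²/2) F² θ‖² = ‖θ‖² + (t⁴/4) ‖F² θ‖². Moreover, if ‖F x‖ ≤ M ‖x‖ for all x ∈ E with M > 0, then for any C > 0 and any δt with 0 < δt ≤ 2 C^{1/3} M^{-4/3}, one has ‖θ + δt F θ + (δt²/2) F² θ‖ ≤ (1 + C·δt) ‖θ‖. -/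
open RealInnerProductSpace

/-!
The odd part `t F θ` of the step is orthogonal to its even part `θ + (t²/2) F² θ`. By Pythagoras the
energy is the sum of theirs, and the cross term `t² ⟪θ, F² θ⟫ = -t² ‖F θ‖²` of the even part cancels
the energy of the odd part. The energy therefore grows by a factor of at most `1 + (t M)⁴ / 4`, and
the CFL condition, cubed, says exactly that `(δt M)⁴ / 4 ≤ 2 C δt`, the linear term of
`(1 + C δt)²`.
-/

section EnergyIdentity

variable {E : Type*} [SeminormedAddCommGroup E] [InnerProductSpace ℝ E] {F : E → E}

theorem inner_map_self_eq_zero_of_skewAdjoint (hF : ∀ x y, ⟪F x, y⟫ = -⟪x, F y⟫) (x : E) :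
    ⟪F x, x⟫ = 0 := by
  rw [← self_eq_neg]
  exact (hF x x).trans (congrArg Neg.neg (real_inner_comm _ _))

theorem inner_map_map_self_of_skewAdjoint (hF : ∀ x y, ⟪F x, y⟫ = -⟪x, F y⟫) (x : E) :
    ⟪x, F (F x)⟫ = -‖F x‖ ^ 2 := by
  rw [← real_inner_self_eq_norm_sq, hF x (F x), neg_neg]

theorem norm_sq_rk2_step_of_skewAdjoint (hF : ∀ x y, ⟪F x, y⟫ = -⟪x, F y⟫) (θ : E) (t : ℝ) :
    ‖θ + t • F θ + (t ^ 2 / 2) • F (F θ)‖ ^ 2 = ‖θ‖ ^ 2 + t ^ 4 / 4 * ‖F (F θ)‖ ^ 2 := by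
  have even_orthogonal_odd : ⟪θ + (t ^ 2 / 2) • F (F θ), t • F θ⟫ = 0 := by
    rw [real_inner_smul_right, inner_add_left, real_inner_smul_left, real_inner_comm,
      inner_map_self_eq_zero_of_skewAdjoint hF, inner_map_self_eq_zero_of_skewAdjoint hF]
    ring
  have norm_sq_even : ‖θ + (t ^ 2 / 2) • F (F θ)‖ ^ 2 =
      ‖θ‖ ^ 2 - t ^ 2 * ‖F θ‖ ^ 2 + t ^ 4 / 4 * ‖F (F θ)‖ ^ 2 := by
    rw [norm_add_sq_real, real_inner_smul_right, inner_map_map_self_of_skewAdjoint hF, norm_smul,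
      mul_pow, Real.norm_eq_abs, sq_abs]
    ring
  calc ‖θ + t • F θ + (t ^ 2 / 2) • F (F θ)‖ ^ 2
      = ‖θ + (t ^ 2 / 2) • F (F θ)‖ ^ 2 + ‖t • F θ‖ ^ 2 := by
        rw [add_right_comm, norm_add_sq_real, even_orthogonal_odd, mul_zero, add_zero]
    _ = ‖θ‖ ^ 2 + t ^ 4 / 4 * ‖F (F θ)‖ ^ 2 := by
        rw [norm_sq_even, norm_smul, mul_pow, Real.norm_eq_abs, sq_abs]
        ring

theorem norm_sq_rk2_step_le_of_skewAdjoint (hF : ∀ x y, ⟪F x, y⟫ = -⟪x, F y⟫) {M : ℝ}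
    (hM : 0 ≤ M) (hFM : ∀ x, ‖F x‖ ≤ M * ‖x‖) (θ : E) (t : ℝ) :
    ‖θ + t • F θ + (t ^ 2 / 2) • F (F θ)‖ ^ 2 ≤ (1 + (t * M) ^ 4 / 4) * ‖θ‖ ^ 2 := by
  have norm_map_map_le : ‖F (F θ)‖ ≤ M * (M * ‖θ‖) :=
    (hFM (F θ)).trans (mul_le_mul_of_nonneg_left (hFM θ) hM)
  calc ‖θ + t • F θ + (t ^ 2 / 2) • F (F θ)‖ ^ 2
      = ‖θ‖ ^ 2 + t ^ 4 / 4 * ‖F (F θ)‖ ^ 2 := norm_sq_rk2_step_of_skewAdjoint hF θ t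
    _ ≤ ‖θ‖ ^ 2 + t ^ 4 / 4 * (M * (M * ‖θ‖)) ^ 2 := by gcongr
    _ = (1 + (t * M) ^ 4 / 4) * ‖θ‖ ^ 2 := by ring

end EnergyIdentity

section CFL

variable {C M δt : ℝ}

theorem le_two_mul_rpow_mul_rpow_iff (hC : 0 ≤ C) (hM : 0 < M) :
    δt ≤ 2 * C ^ ((1 : ℝ) / 3) * M ^ (-(4 : ℝ) / 3) ↔ δt ^ 3 * M ^ 4 ≤ 8 * C := by
  have cube_C : (C ^ ((1 : ℝ) / 3)) ^ 3 = C := by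
    rw [← Real.rpow_mul_natCast hC]
    norm_num
  have cube_M : (M ^ (-(4 : ℝ) / 3)) ^ 3 = (M ^ 4)⁻¹ := by
    rw [← Real.rpow_mul_natCast hM.le, ← Real.rpow_natCast, ← Real.rpow_neg hM.le]
    norm_num
  have odd_three : Odd 3 := by decide
  rw [← odd_three.pow_le_pow, mul_pow, mul_pow, cube_C, cube_M, ← div_eq_mul_inv,
    le_div_iff₀ (by positivity)]
  norm_num

theorem one_add_pow_four_div_four_le_sq (hδt : 0 ≤ δt) (h : δt ^ 3 * M ^ 4 ≤ 8 * C) :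
    1 + (δt * M) ^ 4 / 4 ≤ (1 + C * δt) ^ 2 :=
  calc 1 + (δt * M) ^ 4 / 4 = 1 + δt / 4 * (δt ^ 3 * M ^ 4) := by ring
    _ ≤ 1 + δt / 4 * (8 * C) := by gcongr
    _ ≤ 1 + δt / 4 * (8 * C) + (C * δt) ^ 2 := le_add_of_nonneg_right (sq_nonneg _)
    _ = (1 + C * δt) ^ 2 := by ring

end CFL

theorem RK2_skew_adjoint_stability_general
    {E : Type*} [SeminormedAddCommGroup E] [InnerProductSpace ℝ E]
    (F : E → E) (hF : ∀ x y : E, ⟪F x, y⟫ = -⟪x, F y⟫) :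
    (∀ (θ : E) (t : ℝ),
      ‖θ + t • F θ + (t ^ 2 / 2) • F (F θ)‖ ^ 2 =
        ‖θ‖ ^ 2 + t ^ 4 / 4 * ‖F (F θ)‖ ^ 2) ∧
    (∀ (M : ℝ), 0 < M → (∀ x : E, ‖F x‖ ≤ M * ‖x‖) →
      ∀ (C δt : ℝ), 0 < C → 0 < δt →
        δt ≤ 2 * C ^ ((1 : ℝ) / 3) * M ^ (-(4 : ℝ) / 3) →
        ∀ θ : E,
          ‖θ + δt • F θ + (δt ^ 2 / 2) • F (F θ)‖ ≤ (1 + C * δt) * ‖θ‖) := by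
  refine ⟨norm_sq_rk2_step_of_skewAdjoint hF, fun M hM hFM C δt hC hδt hCFL θ => ?_⟩
  have cube_CFL : δt ^ 3 * M ^ 4 ≤ 8 * C := (le_two_mul_rpow_mul_rpow_iff hC.le hM).1 hCFL
  refine le_of_sq_le_sq ?_ (by positivity)
  calc ‖θ + δt • F θ + (δt ^ 2 / 2) • F (F θ)‖ ^ 2
      ≤ (1 + (δt * M) ^ 4 / 4) * ‖θ‖ ^ 2 := norm_sq_rk2_step_le_of_skewAdjoint hF hM.le hFM θ δt
    _ ≤ (1 + C * δt) ^ 2 * ‖θ‖ ^ 2 := by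
        gcongr
        exact one_add_pow_four_div_four_le_sq hδt.le cube_CFL
    _ = ((1 + C * δt) * ‖θ‖) ^ 2 := (mul_pow _ _ _).symm

/-- Order-two Runge–Kutta step for a skew-adjoint operator: exact energy identity
`‖θ + t F θ + (t²/2) F² θ‖² = ‖θ‖² + (t⁴/4) ‖F² θ‖²`, and stability under the
4/3-CFL condition `δt ≤ 2 C^{1/3} M^{-4/3}`. -/
theorem RK2_skew_adjoint_stability
    {E : Type*} [NormedAddCommGroup E] [InnerProductSpace ℝ E]
    (F : E →L[ℝ] E) (hF : ∀ x y : E, ⟪F x, y⟫ = -⟪x, F y⟫) :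
    (∀ (θ : E) (t : ℝ),
      ‖θ + t • F θ + (t ^ 2 / 2) • (F ^ 2) θ‖ ^ 2 =
        ‖θ‖ ^ 2 + t ^ 4 / 4 * ‖(F ^ 2) θ‖ ^ 2) ∧
    (∀ (M : ℝ), 0 < M → (∀ x : E, ‖F x‖ ≤ M * ‖x‖) →
      ∀ (C δt : ℝ), 0 < C → 0 < δt →
        δt ≤ 2 * C ^ ((1 : ℝ) / 3) * M ^ (-(4 : ℝ) / 3) →
        ∀ θ : E,
          ‖θ + δt • F θ + (δt ^ 2 / 2) • (F ^ 2) θ‖ ≤ (1 + C * δt) * ‖θ‖) := by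
  exact RK2_skew_adjoint_stability_general F hF
end

section
/- Let E be a real inner product space and F : E → E a continuous linear map that is skew-adjoint, i.e. ⟨F x, y⟩ = -⟨x, F y⟩ for all x, y ∈ E. Then for every θ ∈ E and real t, the three-stage scheme with coefficients β = (1, 1, 1/2, 1/8) satisfies the exact energy identity ‖θ + t F θ + (t²/2) F² θ + (t³/8) F³ θ‖² = ‖θ‖² + (t⁶/64) ‖F³ θ‖². Moreover, if ‖F x‖ ≤ M ‖x‖ for all x ∈ E with M > 0, then for any C > 0 and any δt with 0 < δt ≤ 2^{7/5} C^{1/5} M^{-6/5}, one has ‖θ + δt F θ + (δt²/2) F² θ + (δt³/8) F³ θ‖ ≤ (1 + C·δt) ‖θ‖. -/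
open RealInnerProductSpace

/-!
If `F` is skew-adjoint, then `x + b F² x` and `a F x + c F³ x` are orthogonal, and the cross terms
in their squared norms collapse because `⟪x, F² x⟫ = -‖F x‖²`. Pythagoras then gives
`‖x + a F x + b F² x + c F³ x‖² = ‖x‖² + (a² - 2b) ‖F x‖² + (b² - 2ac) ‖F² x‖² + c² ‖F³ x‖²`.
The coefficients `b = a² / 2` and `c = a³ / 8` are those for which both middle terms vanish. What
remains grows the energy by at most the factor `1 + δt⁶ M⁶ / 64`, and the fifth power of the CFL
condition, `δt⁵ M⁶ ≤ 128 C`, makes this at most `1 + 2 C δt ≤ (1 + C δt)²`.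
-/

section SkewAdjoint

variable {E : Type*} [SeminormedAddCommGroup E] [InnerProductSpace ℝ E] {F : E → E}

lemma inner_self_map_eq_zero_of_skew (hF : ∀ x y : E, ⟪F x, y⟫ = -⟪x, F y⟫) (x : E) :
    ⟪x, F x⟫ = 0 :=
  self_eq_neg.mp ((real_inner_comm _ _).trans (hF x x))

lemma inner_map_map_eq_neg_norm_sq_of_skew (hF : ∀ x y : E, ⟪F x, y⟫ = -⟪x, F y⟫) (x : E) :
    ⟪x, F (F x)⟫ = -‖F x‖ ^ 2 := by
  rw [← real_inner_self_eq_norm_sq, hF, neg_neg]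

lemma norm_sq_smul_add_smul_map_map_of_skew (hF : ∀ x y : E, ⟪F x, y⟫ = -⟪x, F y⟫)
    (a b : ℝ) (x : E) :
    ‖a • x + b • F (F x)‖ ^ 2 =
      a ^ 2 * ‖x‖ ^ 2 - 2 * a * b * ‖F x‖ ^ 2 + b ^ 2 * ‖F (F x)‖ ^ 2 := by
  rw [norm_add_sq_real, real_inner_smul_left, real_inner_smul_right,
    inner_map_map_eq_neg_norm_sq_of_skew hF, norm_smul, norm_smul, mul_pow, mul_pow,
    Real.norm_eq_abs, Real.norm_eq_abs, sq_abs, sq_abs]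
  ring

lemma inner_even_odd_eq_zero_of_skew (hF : ∀ x y : E, ⟪F x, y⟫ = -⟪x, F y⟫)
    (a b c d : ℝ) (x : E) :
    ⟪a • x + b • F (F x), c • F x + d • F (F (F x))⟫ = 0 := by
  have h01 : ⟪x, F x⟫ = 0 := inner_self_map_eq_zero_of_skew hF x
  have h12 : ⟪F x, F (F x)⟫ = 0 := inner_self_map_eq_zero_of_skew hF (F x)
  have h21 : ⟪F (F x), F x⟫ = 0 := (real_inner_comm _ _).trans h12
  have h23 : ⟪F (F x), F (F (F x))⟫ = 0 := inner_self_map_eq_zero_of_skew hF (F (F x))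
  have h03 : ⟪x, F (F (F x))⟫ = 0 := by rw [← neg_eq_zero, ← hF, h12]
  simp only [inner_add_left, inner_add_right, real_inner_smul_left, real_inner_smul_right,
    h01, h03, h21, h23, mul_zero, add_zero]

theorem norm_sq_cubic_of_skew (hF : ∀ x y : E, ⟪F x, y⟫ = -⟪x, F y⟫) (a b c : ℝ) (x : E) :
    ‖x + a • F x + b • F^[2] x + c • F^[3] x‖ ^ 2 =
      ‖x‖ ^ 2 + (a ^ 2 - 2 * b) * ‖F x‖ ^ 2 + (b ^ 2 - 2 * a * c) * ‖F^[2] x‖ ^ 2 +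
        c ^ 2 * ‖F^[3] x‖ ^ 2 := by
  simp only [Function.iterate_succ_apply, Function.iterate_zero_apply]
  have even_odd : x + a • F x + b • F (F x) + c • F (F (F x)) =
      ((1 : ℝ) • x + b • F (F x)) + (a • F x + c • F (F (F x))) := by module
  rw [even_odd, norm_add_sq_real, inner_even_odd_eq_zero_of_skew hF,
    norm_sq_smul_add_smul_map_map_of_skew hF, norm_sq_smul_add_smul_map_map_of_skew hF]
  ring

theorem norm_sq_rk3_of_skew (hF : ∀ x y : E, ⟪F x, y⟫ = -⟪x, F y⟫) (t : ℝ) (x : E) :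
    ‖x + t • F x + (t ^ 2 / 2) • F^[2] x + (t ^ 3 / 8) • F^[3] x‖ ^ 2 =
      ‖x‖ ^ 2 + t ^ 6 / 64 * ‖F^[3] x‖ ^ 2 := by
  rw [norm_sq_cubic_of_skew hF]
  ring

end SkewAdjoint

lemma norm_iterate_le_pow_mul_norm {E : Type*} [Norm E] {f : E → E} {M : ℝ} (hM : 0 ≤ M)
    (hf : ∀ x, ‖f x‖ ≤ M * ‖x‖) (n : ℕ) (x : E) : ‖f^[n] x‖ ≤ M ^ n * ‖x‖ := by
  induction n with
  | zero => simp
  | succ n ih =>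
    calc ‖f^[n + 1] x‖ = ‖f (f^[n] x)‖ := by rw [Function.iterate_succ_apply']
      _ ≤ M * ‖f^[n] x‖ := hf _
      _ ≤ M * (M ^ n * ‖x‖) := by gcongr
      _ = M ^ (n + 1) * ‖x‖ := by ring

theorem norm_rk3_le_of_skew {E : Type*} [SeminormedAddCommGroup E] [InnerProductSpace ℝ E]
    {F : E → E} (hF : ∀ x y : E, ⟪F x, y⟫ = -⟪x, F y⟫) {M C δt : ℝ} (hM : 0 ≤ M)
    (hFM : ∀ x, ‖F x‖ ≤ M * ‖x‖) (hδt : 0 ≤ δt) (hcfl : δt ^ 5 * M ^ 6 ≤ 128 * C) (x : E) :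
    ‖x + δt • F x + (δt ^ 2 / 2) • F^[2] x + (δt ^ 3 / 8) • F^[3] x‖ ≤ (1 + C * δt) * ‖x‖ := by
  have hC : 0 ≤ C := by linarith [show 0 ≤ δt ^ 5 * M ^ 6 by positivity]
  refine le_of_sq_le_sq ?_ (by positivity)
  calc ‖x + δt • F x + (δt ^ 2 / 2) • F^[2] x + (δt ^ 3 / 8) • F^[3] x‖ ^ 2
      = ‖x‖ ^ 2 + δt ^ 6 / 64 * ‖F^[3] x‖ ^ 2 := norm_sq_rk3_of_skew hF δt x
    _ ≤ ‖x‖ ^ 2 + δt ^ 6 / 64 * (M ^ 3 * ‖x‖) ^ 2 := by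
      gcongr
      exact norm_iterate_le_pow_mul_norm hM hFM 3 x
    _ = (1 + δt ^ 5 * M ^ 6 * δt / 64) * ‖x‖ ^ 2 := by ring
    _ ≤ (1 + 128 * C * δt / 64) * ‖x‖ ^ 2 := by gcongr
    _ = (1 + 2 * (C * δt)) * ‖x‖ ^ 2 := by ring
    _ ≤ (1 + C * δt) ^ 2 * ‖x‖ ^ 2 := by
      gcongr
      linarith [sq_nonneg (C * δt), add_sq 1 (C * δt)]
    _ = ((1 + C * δt) * ‖x‖) ^ 2 := (mul_pow _ _ _).symm

lemma rpow_div_natCast_pow_eq {x : ℝ} (hx : 0 ≤ x) (p : ℝ) {n : ℕ} (hn : n ≠ 0) :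
    (x ^ (p / n)) ^ n = x ^ p := by
  rw [← Real.rpow_mul_natCast hx, div_mul_cancel₀ p (Nat.cast_ne_zero.mpr hn)]

lemma pow_five_mul_pow_six_le_of_cfl {M C δt : ℝ} (hM : 0 < M) (hC : 0 ≤ C) (hδt : 0 ≤ δt)
    (hcfl : δt ≤ (2 : ℝ) ^ ((7 : ℝ) / 5) * C ^ ((1 : ℝ) / 5) * M ^ (-(6 : ℝ) / 5)) :
    δt ^ 5 * M ^ 6 ≤ 128 * C := by
  have two_pow : ((2 : ℝ) ^ ((7 : ℝ) / 5)) ^ 5 = 128 :=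
    (rpow_div_natCast_pow_eq zero_le_two 7 (n := 5) (by decide)).trans (by norm_num)
  have C_pow : (C ^ ((1 : ℝ) / 5)) ^ 5 = C :=
    (rpow_div_natCast_pow_eq hC 1 (n := 5) (by decide)).trans (Real.rpow_one C)
  have M_pow : (M ^ (-(6 : ℝ) / 5)) ^ 5 = (M ^ 6)⁻¹ :=
    (rpow_div_natCast_pow_eq hM.le (-6) (n := 5) (by decide)).trans
      (by rw [Real.rpow_neg hM.le]; norm_cast)
  rw [← le_div_iff₀ (by positivity), div_eq_mul_inv]
  calc δt ^ 5 ≤ ((2 : ℝ) ^ ((7 : ℝ) / 5) * C ^ ((1 : ℝ) / 5) * M ^ (-(6 : ℝ) / 5)) ^ 5 := by gcongr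
    _ = 128 * C * (M ^ 6)⁻¹ := by rw [mul_pow, mul_pow, two_pow, C_pow, M_pow]

theorem RK3_type_skew_adjoint_stability_general
    {E : Type*} [SeminormedAddCommGroup E] [InnerProductSpace ℝ E]
    (F : E → E) (hF : ∀ x y : E, ⟪F x, y⟫ = -⟪x, F y⟫) :
    (∀ (θ : E) (t : ℝ),
      ‖θ + t • F θ + (t ^ 2 / 2) • F^[2] θ + (t ^ 3 / 8) • F^[3] θ‖ ^ 2 =
        ‖θ‖ ^ 2 + t ^ 6 / 64 * ‖F^[3] θ‖ ^ 2) ∧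
    (∀ (M : ℝ), 0 < M → (∀ x : E, ‖F x‖ ≤ M * ‖x‖) →
      ∀ (C δt : ℝ), 0 ≤ C → 0 ≤ δt →
        δt ≤ (2 : ℝ) ^ ((7 : ℝ) / 5) * C ^ ((1 : ℝ) / 5) * M ^ (-(6 : ℝ) / 5) →
        ∀ θ : E,
          ‖θ + δt • F θ + (δt ^ 2 / 2) • F^[2] θ + (δt ^ 3 / 8) • F^[3] θ‖ ≤
            (1 + C * δt) * ‖θ‖) :=
  ⟨fun θ t ↦ norm_sq_rk3_of_skew hF t θ, fun _ hM hFM _ _ hC hδt hcfl ↦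
    norm_rk3_le_of_skew hF hM.le hFM hδt (pow_five_mul_pow_six_le_of_cfl hM hC hδt hcfl)⟩

/-- Three-stage scheme with coefficients `(1, 1, 1/2, 1/8)` for a skew-adjoint operator:
exact energy identity `‖θ + t F θ + (t²/2) F² θ + (t³/8) F³ θ‖² = ‖θ‖² + (t⁶/64) ‖F³ θ‖²`,
and stability under the 6/5-CFL condition `δt ≤ 2^{7/5} C^{1/5} M^{-6/5}`. -/
theorem RK3_type_skew_adjoint_stability
    {E : Type*} [NormedAddCommGroup E] [InnerProductSpace ℝ E]
    (F : E →L[ℝ] E) (hF : ∀ x y : E, ⟪F x, y⟫ = -⟪x, F y⟫) :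
    (∀ (θ : E) (t : ℝ),
      ‖θ + t • F θ + (t ^ 2 / 2) • (F ^ 2) θ + (t ^ 3 / 8) • (F ^ 3) θ‖ ^ 2 =
        ‖θ‖ ^ 2 + t ^ 6 / 64 * ‖(F ^ 3) θ‖ ^ 2) ∧
    (∀ (M : ℝ), 0 < M → (∀ x : E, ‖F x‖ ≤ M * ‖x‖) →
      ∀ (C δt : ℝ), 0 < C → 0 < δt →
        δt ≤ (2 : ℝ) ^ ((7 : ℝ) / 5) * C ^ ((1 : ℝ) / 5) * M ^ (-(6 : ℝ) / 5) →
        ∀ θ : E,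
          ‖θ + δt • F θ + (δt ^ 2 / 2) • (F ^ 2) θ + (δt ^ 3 / 8) • (F ^ 3) θ‖ ≤
            (1 + C * δt) * ‖θ‖) := by
  simp only [FunLike.coe_pow_eq_iterate]
  exact (RK3_type_skew_adjoint_stability_general F hF).imp_right
    fun stable M hM hFM C δt hC hδt ↦ stable M hM hFM C δt hC.le hδt.le
end

section
/- Let E be a real inner product space and F : E → E a continuous linear map that is skew-adjoint, i.e. ⟨F x, y⟩ = -⟨x, F y⟩ for all x, y ∈ E. Set β₃ = (2-√2)/4 and β₄ = (3-2√2)/8. Then for every θ ∈ E and real t, the four-stage scheme with coefficients (1, 1, 1/2, β₃, β₄) satisfies the exact energy identity ‖θ + t F θ + (t²/2) F² θ + β₃ t³ F³ θ + β₄ t⁴ F⁴ θ‖² = ‖θ‖² + β₄² t⁸ ‖F⁴ θ‖². Moreover, if ‖F x‖ ≤ M ‖x‖ for all x ∈ E with M > 0, then for any C > 0 and any δt with 0 < δt ≤ (2C/β₄²)^{1/7} M^{-8/7}, one has ‖θ + δt F θ + (δt²/2) F² θ + β₃ δt³ F³ θ + β₄ δt⁴ F⁴ θ‖ ≤ (1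 + C·δt) ‖θ‖. -/
open RealInnerProductSpace

/-!
The scheme is `R(t F)`, where `R(z) = 1 + z + z²/2 + β₃ z³ + β₄ z⁴`. The adjoint of `F` is `-F`, so
`‖R(t F) θ‖² = ⟪θ, R(-t F) R(t F) θ⟫`, where
`R(-z) R(z) = 1 + (1/4 + 2 β₄ - 2 β₃) z⁴ + (β₄ - β₃²) z⁶ + β₄² z⁸`. The coefficients are chosen to
annihilate the middle terms. The growth factor is then at most `√(1 + β₄² (δt M)⁸)`, and the CFL
condition says exactly that `β₄² (δt M)⁸ ≤ 2 C δt`.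
-/

theorem norm_pow_apply_le {R V : Type*} [Semiring R] [SeminormedAddCommGroup V] [Module R V]
    {f : Module.End R V} {K : ℝ} (hK : 0 ≤ K) (hf : ∀ x, ‖f x‖ ≤ K * ‖x‖) (n : ℕ) (x : V) :
    ‖(f ^ n) x‖ ≤ K ^ n * ‖x‖ := by
  induction n with
  | zero => simp
  | succ n ih =>
    calc ‖(f ^ (n + 1)) x‖ = ‖f ((f ^ n) x)‖ := by rw [pow_succ', Module.End.mul_apply]
      _ ≤ K * ‖(f ^ n) x‖ := hf _
      _ ≤ K * (K ^ n * ‖x‖) := by gcongr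
      _ = K ^ (n + 1) * ‖x‖ := by ring

theorem pow_mul_pow_le_of_le_rpow_mul_rpow {m n : ℕ} (hm : m ≠ 0) {t M K : ℝ} (ht : 0 ≤ t)
    (hM : 0 < M) (hK : 0 ≤ K) (h : t ≤ K ^ (1 / m : ℝ) * M ^ (-n / m : ℝ)) :
    t ^ m * M ^ n ≤ K := by
  have hm' : (m : ℝ) ≠ 0 := Nat.cast_ne_zero.mpr hm
  have hKm : (K ^ (1 / m : ℝ)) ^ m = K := by
    rw [one_div, Real.rpow_inv_natCast_pow hK hm]
  have hMm : (M ^ (-n / m : ℝ)) ^ m = (M ^ n)⁻¹ := by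
    rw [← Real.rpow_mul_natCast hM.le, div_mul_cancel₀ _ hm', Real.rpow_neg hM.le,
      Real.rpow_natCast]
  calc t ^ m * M ^ n ≤ (K ^ (1 / m : ℝ) * M ^ (-n / m : ℝ)) ^ m * M ^ n := by gcongr
    _ = K := by rw [mul_pow, hKm, hMm, inv_mul_cancel_right₀ (pow_pos hM n).ne']

section Polynomial

open Polynomial

theorem isAdjointPair_aeval_s9 {R V : Type*} [CommSemiring R] [AddCommMonoid V] [Module R V]
    {B : V →ₗ[R] V →ₗ[R] R} {f g : Module.End R V} (hfg : LinearMap.IsAdjointPair B B f g)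
    (p : R[X]) : LinearMap.IsAdjointPair B B (aeval f p) (aeval g p) := by
  induction p using Polynomial.induction_on' with
  | add p q hp hq =>
    rw [map_add, map_add]
    exact hp.add hq
  | monomial n a =>
    have hpow : LinearMap.IsAdjointPair B B ⇑(f ^ n) ⇑(g ^ n) := by
      induction n with
      | zero => exact LinearMap.isAdjointPair_one
      | succ n ih => simpa only [pow_succ f, pow_succ' g] using ih.mul hfg
    intro x y
    simp [aeval_monomial, ← Algebra.smul_def, hpow x y]

/-- The stability polynomial `R(z) = 1 + z + z²/2 + β₃ z³ + β₄ z⁴` of a four-stage scheme of order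
at least two: for linear `F`, one step of size `t` maps `θ` to `R(t F) θ`. -/
noncomputable def stabilityPolynomial (β₃ β₄ : ℝ) : ℝ[X] :=
  1 + X + C (1 / 2) * X ^ 2 + C β₃ * X ^ 3 + C β₄ * X ^ 4

theorem aeval_smul_stabilityPolynomial {V : Type*} [AddCommGroup V] [Module ℝ V]
    (F : Module.End ℝ V) (β₃ β₄ t : ℝ) (x : V) :
    aeval (t • F) (stabilityPolynomial β₃ β₄) x =
      x + t • F x + (t ^ 2 / 2) • (F ^ 2) x + (β₃ * t ^ 3) • (F ^ 3) x
        + (β₄ * t ^ 4) • (F ^ 4) x := by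
  simp [stabilityPolynomial, _root_.smul_pow, smul_smul, div_eq_mul_inv, mul_comm β₃,
    mul_comm β₄]

theorem stabilityPolynomial_comp_neg_X_mul_self {β₃ β₄ : ℝ} (h₄ : 1 / 4 + 2 * β₄ = 2 * β₃)
    (h₆ : β₃ ^ 2 = β₄) :
    (stabilityPolynomial β₃ β₄).comp (-X) * stabilityPolynomial β₃ β₄ =
      1 + C (β₄ ^ 2) * X ^ 8 := by
  have hhalf : (C (1 / 2) : ℝ[X]) * 2 = 1 := by
    rw [← C_ofNat, ← C_mul]; norm_num
  have h₄' : C (1 / 2) ^ 2 + 2 * C β₄ = 2 * C β₃ := by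
    rw [← C_ofNat, ← C_mul, ← C_mul, ← C_pow, ← C_add, ← h₄]; norm_num
  have h₆' : C β₃ ^ 2 = C β₄ := by rw [← C_pow, h₆]
  simp only [stabilityPolynomial, add_comp, mul_comp, pow_comp, one_comp, C_comp, X_comp, C_pow]
  linear_combination (X ^ 2 + C β₄ * X ^ 6) * hhalf + X ^ 4 * h₄' - X ^ 6 * h₆'

section SkewAdjoint

variable {E : Type*} [SeminormedAddCommGroup E] [InnerProductSpace ℝ E] {F : Module.End ℝ E}
  {β₃ β₄ : ℝ}

theorem norm_sq_aeval_of_isSkewAdjoint (hF : (innerₗ E).IsSkewAdjoint F) (p : ℝ[X]) (x : E) :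
    ‖aeval F p x‖ ^ 2 = ⟪x, aeval F (p.comp (-X) * p) x⟫ := by
  have hadj := isAdjointPair_aeval_s9 (g := -F) hF p x (aeval F p x)
  rw [map_mul, Module.End.mul_apply, aeval_comp, map_neg, aeval_X, ← real_inner_self_eq_norm_sq]
  exact hadj

theorem norm_sq_aeval_stabilityPolynomial (hF : (innerₗ E).IsSkewAdjoint F)
    (h₄ : 1 / 4 + 2 * β₄ = 2 * β₃) (h₆ : β₃ ^ 2 = β₄) (x : E) :
    ‖aeval F (stabilityPolynomial β₃ β₄) x‖ ^ 2 = ‖x‖ ^ 2 + β₄ ^ 2 * ‖(F ^ 4) x‖ ^ 2 := by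
  have hcomp : (X ^ 4 : ℝ[X]).comp (-X) * X ^ 4 = X ^ 8 := by
    rw [X_pow_comp]; ring
  have hpow : ⟪x, (F ^ 8) x⟫ = ‖(F ^ 4) x‖ ^ 2 := by
    have hnorm := norm_sq_aeval_of_isSkewAdjoint hF (X ^ 4) x
    rw [hcomp, aeval_X_pow, aeval_X_pow] at hnorm
    exact hnorm.symm
  calc ‖aeval F (stabilityPolynomial β₃ β₄) x‖ ^ 2
      = ⟪x, aeval F (1 + C (β₄ ^ 2) * X ^ 8) x⟫ := by
        rw [norm_sq_aeval_of_isSkewAdjoint hF, stabilityPolynomial_comp_neg_X_mul_self h₄ h₆]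
    _ = ⟪x, x + β₄ ^ 2 • (F ^ 8) x⟫ := by simp [-map_pow, aeval_X_pow]
    _ = ‖x‖ ^ 2 + β₄ ^ 2 * ‖(F ^ 4) x‖ ^ 2 := by
        rw [inner_add_right, real_inner_smul_right, real_inner_self_eq_norm_sq, hpow]

theorem norm_aeval_stabilityPolynomial_le (hF : (innerₗ E).IsSkewAdjoint F)
    (h₄ : 1 / 4 + 2 * β₄ = 2 * β₃) (h₆ : β₃ ^ 2 = β₄) {K ε : ℝ} (hK : 0 ≤ K)
    (hFK : ∀ x, ‖F x‖ ≤ K * ‖x‖) (hε : 0 ≤ ε) (hKε : β₄ ^ 2 * K ^ 8 ≤ 2 * ε) (x : E) :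
    ‖aeval F (stabilityPolynomial β₃ β₄) x‖ ≤ (1 + ε) * ‖x‖ := by
  refine le_of_pow_le_pow_left₀ two_ne_zero (by positivity) ?_
  calc ‖aeval F (stabilityPolynomial β₃ β₄) x‖ ^ 2
      = ‖x‖ ^ 2 + β₄ ^ 2 * ‖(F ^ 4) x‖ ^ 2 := norm_sq_aeval_stabilityPolynomial hF h₄ h₆ x
    _ ≤ ‖x‖ ^ 2 + β₄ ^ 2 * (K ^ 4 * ‖x‖) ^ 2 := by gcongr; exact norm_pow_apply_le hK hFK 4 x
    _ = (1 + β₄ ^ 2 * K ^ 8) * ‖x‖ ^ 2 := by ring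
    _ ≤ (1 + 2 * ε) * ‖x‖ ^ 2 := by gcongr
    _ ≤ (1 + ε) ^ 2 * ‖x‖ ^ 2 := by gcongr; linarith [sq_nonneg ε, add_sq 1 ε]
    _ = ((1 + ε) * ‖x‖) ^ 2 := by ring

end SkewAdjoint

end Polynomial

theorem RK4_type_skew_adjoint_stability_general
    {E : Type*} [SeminormedAddCommGroup E] [InnerProductSpace ℝ E]
    (F : E →ₗ[ℝ] E) (hF : ∀ x y : E, ⟪F x, y⟫ = -⟪x, F y⟫)
    (β₃ β₄ : ℝ) (h₄ : 1 / 4 + 2 * β₄ = 2 * β₃) (h₆ : β₃ ^ 2 = β₄) :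
    (∀ (θ : E) (t : ℝ),
      ‖θ + t • F θ + (t ^ 2 / 2) • (F ^ 2) θ + (β₃ * t ^ 3) • (F ^ 3) θ
          + (β₄ * t ^ 4) • (F ^ 4) θ‖ ^ 2 =
        ‖θ‖ ^ 2 + β₄ ^ 2 * t ^ 8 * ‖(F ^ 4) θ‖ ^ 2) ∧
    (∀ (M : ℝ), 0 < M → (∀ x : E, ‖F x‖ ≤ M * ‖x‖) →
      ∀ (C δt : ℝ), 0 < C → 0 < δt →
        δt ≤ (2 * C / β₄ ^ 2) ^ ((1 : ℝ) / 7) * M ^ (-(8 : ℝ) / 7) →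
        ∀ θ : E,
          ‖θ + δt • F θ + (δt ^ 2 / 2) • (F ^ 2) θ + (β₃ * δt ^ 3) • (F ^ 3) θ
              + (β₄ * δt ^ 4) • (F ^ 4) θ‖ ≤ (1 + C * δt) * ‖θ‖) := by
  have hskew (t : ℝ) : (innerₗ E).IsSkewAdjoint (t • F) := fun x y ↦ by
    simp [inner_smul_right, hF]
  simp only [← aeval_smul_stabilityPolynomial]
  refine ⟨fun θ t ↦ ?_, fun M hM hFM C δt hC hδt hcfl ↦ ?_⟩
  · rw [norm_sq_aeval_stabilityPolynomial (hskew t) h₄ h₆, smul_pow, LinearMap.smul_apply,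
      norm_smul, mul_pow, norm_pow, Real.norm_eq_abs, ← pow_mul, Even.pow_abs (by decide)]
    ring
  · have hβ₄ : β₄ ≠ 0 := by
      rintro rfl
      norm_num [pow_eq_zero_iff two_ne_zero |>.mp h₆] at h₄
    have hpow : δt ^ 7 * M ^ 8 ≤ 2 * C / β₄ ^ 2 :=
      pow_mul_pow_le_of_le_rpow_mul_rpow (by decide) hδt.le hM (by positivity)
        (by exact_mod_cast hcfl)
    refine norm_aeval_stabilityPolynomial_le (hskew δt) h₄ h₆ (K := δt * M) (by positivity)
      (fun x ↦ ?_) (by positivity) ?_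
    · rw [LinearMap.smul_apply, norm_smul, Real.norm_of_nonneg hδt.le, mul_assoc]
      gcongr
      exact hFM x
    · rw [le_div_iff₀ (by positivity)] at hpow
      linarith [mul_le_mul_of_nonneg_left hpow hδt.le]

/-- Four-stage scheme with coefficients `(1, 1, 1/2, (2-√2)/4, (3-2√2)/8)` for a
skew-adjoint operator: exact energy identity and stability under the 8/7-CFL condition
`δt ≤ (2C/β₄²)^{1/7} M^{-8/7}`. -/
theorem RK4_type_skew_adjoint_stability
    {E : Type*} [NormedAddCommGroup E] [InnerProductSpace ℝ E]
    (F : E →L[ℝ] E) (hF : ∀ x y : E, ⟪F x, y⟫ = -⟪x, F y⟫)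
    (β₃ β₄ : ℝ) (hβ₃ : β₃ = (2 - Real.sqrt 2) / 4) (hβ₄ : β₄ = (3 - 2 * Real.sqrt 2) / 8) :
    (∀ (θ : E) (t : ℝ),
      ‖θ + t • F θ + (t ^ 2 / 2) • (F ^ 2) θ + (β₃ * t ^ 3) • (F ^ 3) θ
          + (β₄ * t ^ 4) • (F ^ 4) θ‖ ^ 2 =
        ‖θ‖ ^ 2 + β₄ ^ 2 * t ^ 8 * ‖(F ^ 4) θ‖ ^ 2) ∧
    (∀ (M : ℝ), 0 < M → (∀ x : E, ‖F x‖ ≤ M * ‖x‖) →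
      ∀ (C δt : ℝ), 0 < C → 0 < δt →
        δt ≤ (2 * C / β₄ ^ 2) ^ ((1 : ℝ) / 7) * M ^ (-(8 : ℝ) / 7) →
        ∀ θ : E,
          ‖θ + δt • F θ + (δt ^ 2 / 2) • (F ^ 2) θ + (β₃ * δt ^ 3) • (F ^ 3) θ
              + (β₄ * δt ^ 4) • (F ^ 4) θ‖ ≤ (1 + C * δt) * ‖θ‖) := by
  have hsqrt : Real.sqrt 2 ^ 2 = 2 := Real.sq_sqrt zero_le_two
  exact RK4_type_skew_adjoint_stability_general F.toLinearMap hF β₃ β₄ (by rw [hβ₃, hβ₄]; ring)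
    (by rw [hβ₃, hβ₄]; linear_combination hsqrt / 16)
end

section
/- Let d ≥ 1 and let u : ℝ^d → ℝ^d be a continuously differentiable vector field with divergence zero everywhere, i.e. Σ_{i=1}^d ∂_{x_i} u_i(x) = 0 for all x ∈ ℝ^d. Let v : ℝ^d → ℝ^d be a continuously differentiable vector field with compact support. Then ∫_{ℝ^d} ⟨v(x), (u·∇)v(x)⟩ dx = 0, where (u·∇)v(x) denotes the Fréchet derivative of v at x applied to the vector u(x), and ⟨·,·⟩ is the Euclidean inner product on ℝ^d. -/
open MeasureTheory Finset RealInnerProductSpace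

/-!
If `u` is divergence-free then integration by parts in each coordinate gives `∫ Dg(u) = 0` for
every compactly supported `C¹` function `g`. Since `⟪v, (u·∇)v⟫` is half the derivative of `‖v‖²`
along `u`, energy conservation is the case `g = ‖v‖²`.
-/

section Divergence

variable {E : Type*} [NormedAddCommGroup E] [NormedSpace ℝ E]

/-- The divergence of a vector field, encoded as the trace of its Fréchet derivative so that no
basis has to be chosen. It is `0` at points where the field is not differentiable, and everywhere
if `E` is infinite-dimensional. -/
noncomputable def divergence (u : E → E) (x : E) : ℝ :=
  LinearMap.trace ℝ E (fderiv ℝ u x)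

theorem divergence_eq_sum_basis {ι : Type*} [Fintype ι] (b : Module.Basis ι ℝ E)
    (u : E → E) (x : E) :
    divergence u x = ∑ i, b.coord i (fderiv ℝ u x (b i)) := by
  classical
  simp [divergence, LinearMap.trace_eq_matrix_trace ℝ b, Matrix.trace, LinearMap.toMatrix_apply]

theorem divergence_eq_sum_fderiv_coord {ι : Type*} [Fintype ι] (b : Module.Basis ι ℝ E)
    {u : E → E} {x : E} (hu : DifferentiableAt ℝ u x) :
    divergence u x = ∑ i, fderiv ℝ (fun y ↦ b.coord i (u y)) x (b i) := by
  have : FiniteDimensional ℝ E := .of_basis b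
  have fderiv_coord i :
      fderiv ℝ (fun y ↦ b.coord i (u y)) x = (b.coord i).toContinuousLinearMap ∘L fderiv ℝ u x :=
    ((b.coord i).toContinuousLinearMap.hasFDerivAt.comp x hu.hasFDerivAt).fderiv
  simp only [divergence_eq_sum_basis b, fderiv_coord, ContinuousLinearMap.comp_apply,
    LinearMap.coe_toContinuousLinearMap']

theorem divergence_euclideanSpace {ι : Type*} [Fintype ι] [DecidableEq ι]
    (u : EuclideanSpace ℝ ι → EuclideanSpace ℝ ι) (x : EuclideanSpace ℝ ι) :
    divergence u x = ∑ i, fderiv ℝ u x (EuclideanSpace.single i 1) i := by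
  simp [divergence_eq_sum_basis (EuclideanSpace.basisFun ι ℝ).toBasis]

end Divergence

section IntegrationByParts

variable {E F : Type*} [NormedAddCommGroup E] [NormedSpace ℝ E] [MeasurableSpace E]
  [NormedAddCommGroup F] [NormedSpace ℝ F] {μ : Measure E}

section Integrability

variable [OpensMeasurableSpace E] [IsFiniteMeasureOnCompacts μ]

theorem integrable_smul_fderiv_of_hasCompactSupport {φ : E → ℝ} {g : E → F}
    (hφ : Continuous φ) (hg : ContDiff ℝ 1 g) (hgc : HasCompactSupport g) (e : E) :
    Integrable (fun x ↦ φ x • fderiv ℝ g x e) μ :=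
  (hφ.smul ((hg.continuous_fderiv one_ne_zero).clm_apply continuous_const))
    |>.integrable_of_hasCompactSupport (hgc.fderiv_apply (𝕜 := ℝ) e).smul_left

theorem integrable_fderiv_smul_of_hasCompactSupport {φ : E → ℝ} {g : E → F}
    (hφ : ContDiff ℝ 1 φ) (hg : Continuous g) (hgc : HasCompactSupport g) (e : E) :
    Integrable (fun x ↦ fderiv ℝ φ x e • g x) μ :=
  (((hφ.continuous_fderiv one_ne_zero).clm_apply continuous_const).smul hg)
    |>.integrable_of_hasCompactSupport hgc.smul_left

end Integrability

variable [FiniteDimensional ℝ E] [BorelSpace E] [μ.IsAddHaarMeasure]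

theorem integral_smul_fderiv_eq_neg_fderiv_smul_of_hasCompactSupport {φ : E → ℝ} {g : E → F}
    (hφ : ContDiff ℝ 1 φ) (hg : ContDiff ℝ 1 g) (hgc : HasCompactSupport g) (e : E) :
    ∫ x, φ x • fderiv ℝ g x e ∂μ = -∫ x, fderiv ℝ φ x e • g x ∂μ :=
  integral_smul_fderiv_eq_neg_fderiv_smul_of_integrable
    (integrable_fderiv_smul_of_hasCompactSupport hφ hg.continuous hgc e)
    (integrable_smul_fderiv_of_hasCompactSupport hφ.continuous hg hgc e)
    ((hφ.continuous.smul hg.continuous).integrable_of_hasCompactSupport hgc.smul_left)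
    (fun x _ ↦ hφ.differentiable one_ne_zero x) (fun x _ ↦ hg.differentiable one_ne_zero x)

theorem integral_fderiv_apply_eq_neg_integral_divergence_smul {u : E → E} {g : E → F}
    (hu : ContDiff ℝ 1 u) (hg : ContDiff ℝ 1 g) (hgc : HasCompactSupport g) :
    ∫ x, fderiv ℝ g x (u x) ∂μ = -∫ x, divergence u x • g x ∂μ := by
  let b := Module.finBasis ℝ E
  have hcoord i : ContDiff ℝ 1 (fun x ↦ b.coord i (u x)) :=
    (b.coord i).toContinuousLinearMap.contDiff.comp hu
  have fderiv_apply_eq_sum x :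
      fderiv ℝ g x (u x) = ∑ i, b.coord i (u x) • fderiv ℝ g x (b i) := by
    simp only [Module.Basis.coord_apply, ← map_smul, ← map_sum, b.sum_repr]
  calc ∫ x, fderiv ℝ g x (u x) ∂μ
      = ∑ i, ∫ x, b.coord i (u x) • fderiv ℝ g x (b i) ∂μ := by
        simp_rw [fderiv_apply_eq_sum]
        exact integral_finsetSum _ fun i _ ↦
          integrable_smul_fderiv_of_hasCompactSupport (hcoord i).continuous hg hgc (b i)
    _ = -∑ i, ∫ x, fderiv ℝ (fun y ↦ b.coord i (u y)) x (b i) • g x ∂μ := by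
        rw [← sum_neg_distrib]
        exact sum_congr rfl fun i _ ↦
          integral_smul_fderiv_eq_neg_fderiv_smul_of_hasCompactSupport (hcoord i) hg hgc (b i)
    _ = -∫ x, divergence u x • g x ∂μ := by
        simp_rw [divergence_eq_sum_fderiv_coord b (hu.differentiable one_ne_zero _), sum_smul]
        rw [integral_finsetSum _ fun i _ ↦
          integrable_fderiv_smul_of_hasCompactSupport (hcoord i) hg.continuous hgc (b i)]

end IntegrationByParts

theorem fderiv_norm_sq_comp_apply {E F : Type*} [NormedAddCommGroup E] [NormedSpace ℝ E]
    [NormedAddCommGroup F] [InnerProductSpace ℝ F] {v : E → F} {x : E}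
    (hv : DifferentiableAt ℝ v x) (w : E) :
    fderiv ℝ (fun y ↦ ‖v y‖ ^ 2) x w = 2 * ⟪v x, fderiv ℝ v x w⟫ := by
  simp [hv.hasFDerivAt.norm_sq.fderiv]

theorem convective_term_energy_conservation_general {E F : Type*}
    [NormedAddCommGroup E] [NormedSpace ℝ E] [FiniteDimensional ℝ E] [MeasurableSpace E]
    [BorelSpace E] [NormedAddCommGroup F] [InnerProductSpace ℝ F]
    {μ : Measure E} [μ.IsAddHaarMeasure] {u : E → E} (hu : ContDiff ℝ 1 u)
    (hdiv : ∀ x, divergence u x = 0) {v : E → F} (hv : ContDiff ℝ 1 v)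
    (hvc : HasCompactSupport v) :
    ∫ x, ⟪v x, fderiv ℝ v x (u x)⟫ ∂μ = 0 := by
  have hvsq : HasCompactSupport (fun x ↦ ‖v x‖ ^ 2) :=
    hvc.comp_left (g := fun y ↦ ‖y‖ ^ 2) (by simp)
  have two_mul_integral_eq_zero : 2 * ∫ x, ⟪v x, fderiv ℝ v x (u x)⟫ ∂μ = 0 :=
    calc 2 * ∫ x, ⟪v x, fderiv ℝ v x (u x)⟫ ∂μ
        = ∫ x, fderiv ℝ (fun y ↦ ‖v y‖ ^ 2) x (u x) ∂μ := by
          simp_rw [fderiv_norm_sq_comp_apply (hv.differentiable one_ne_zero _),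
            integral_const_mul]
      _ = -∫ x, divergence u x • ‖v x‖ ^ 2 ∂μ :=
          integral_fderiv_apply_eq_neg_integral_divergence_smul hu (hv.norm_sq ℝ) hvsq
      _ = 0 := by simp [hdiv]
  simpa using two_mul_integral_eq_zero

/-- Energy conservation of the convective term for a divergence-free velocity field on
`ℝ^d`: `∫ ⟪v, (u·∇)v⟫ = 0` for a compactly supported `C¹` vector field `v`. -/
theorem convective_term_energy_conservation
    (d : ℕ) (hd : 1 ≤ d)
    (u : EuclideanSpace ℝ (Fin d) → EuclideanSpace ℝ (Fin d))
    (hu : ContDiff ℝ 1 u)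
    (hdiv : ∀ x, ∑ i : Fin d, fderiv ℝ u x (EuclideanSpace.single i 1) i = 0)
    (v : EuclideanSpace ℝ (Fin d) → EuclideanSpace ℝ (Fin d))
    (hv : ContDiff ℝ 1 v) (hvc : HasCompactSupport v) :
    ∫ x, ⟪v x, fderiv ℝ v x (u x)⟫ = 0 :=
  convective_term_energy_conservation_general hu
    (fun x ↦ (divergence_euclideanSpace u x).trans (hdiv x)) hv hvc
end

section
/- Let K ≥ 0 be a natural number and α₀, …, α_K real numbers with Σ_{k=0}^{K} α_k = 1. For real θ near 0, define the complex number ζ(θ) = (e^{iθ} - 1) / (Σ_{k=0}^{K} α_k e^{-ikθ}) (the denominator tends to 1 as θ → 0, so ζ(θ) is well defined on a neighborhood of 0). Then, as θ → 0, Re ζ(θ) = -(Σ_{k=0}^{K} k α_k + 1/2) θ² + o(θ²); that is, the function θ ↦ Re ζ(θ) + (Υ₁ + 1/2) θ², where Υ₁ = Σ_{k=0}^{K} k α_k, is o(θ²) at 0. -/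
open Complex Filter Asymptotics Topology Finset

/-! Near `0` one has `e^z - 1 = z φ(z)` with `φ(z) = 1 + z / 2 + o(z)`. Hence, with
`D(z) = ∑ α_k e^{-τ_k z}`, the boundary locus is `z φ(z) / D(z)`, and its second-order expansion is
the quotient rule for `φ / D` at `0`. Along the imaginary axis `z = iθ` and for real coefficients,
the linear term is purely imaginary and `z ^ 2 = -θ ^ 2`. -/

section Expansion

variable {𝕜 F : Type*} [NontriviallyNormedField 𝕜] [NormedAddCommGroup F] [NormedSpace 𝕜 F]

theorem hasDerivAt_dslope_of_hasFPowerSeriesAt {f : 𝕜 → F} {p : FormalMultilinearSeries 𝕜 𝕜 F}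
    {x : 𝕜} (hf : HasFPowerSeriesAt f p x) : HasDerivAt (dslope f x) (p.coeff 2) x := by
  have h := hf.has_fpower_series_dslope_fslope.hasDerivAt
  rwa [← Pi.one_def, ← FormalMultilinearSeries.coeff, FormalMultilinearSeries.coeff_fslope] at h

theorem isLittleO_sub_smul_sub_quadratic {g : 𝕜 → F} {g' : F} {x : 𝕜} (hg : HasDerivAt g g' x) :
    (fun z => (z - x) • g z - ((z - x) • g x + (z - x) ^ 2 • g'))
      =o[𝓝 x] fun z => (z - x) ^ 2 := by
  refine ((isBigO_refl (fun z => z - x) (𝓝 x)).smul_isLittleO hg.isLittleO).congr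
    (fun z => ?_) fun z => by rw [smul_eq_mul, sq]
  simp only [smul_sub, smul_smul, sq]
  abel

end Expansion

theorem hasDerivAt_dslope_exp_zero : HasDerivAt (dslope exp 0) (1 / 2) (0 : ℂ) := by
  have h : HasFPowerSeriesAt exp (NormedSpace.expSeries ℂ ℂ) 0 := by
    rw [exp_eq_exp_ℂ]
    exact NormedSpace.exp_hasFPowerSeriesAt_zero
  have hcoeff : (NormedSpace.expSeries ℂ ℂ).coeff 2 = 1 / 2 := by
    rw [FormalMultilinearSeries.coeff, Pi.one_def, NormedSpace.expSeries_apply_eq_div, one_pow,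
      Nat.factorial_two, Nat.cast_ofNat]
  exact hcoeff ▸ hasDerivAt_dslope_of_hasFPowerSeriesAt h

theorem re_quadratic_I_mul (a b θ : ℝ) :
    (a * (I * θ) + b * (I * θ) ^ 2 : ℂ).re = -(b * θ ^ 2) := by
  simp [sq]

section BoundaryLocus

variable {ι : Type*} (s : Finset ι)

theorem hasDerivAt_sum_mul_exp_neg_mul_zero (α τ : ι → ℂ) :
    HasDerivAt (fun z => ∑ k ∈ s, α k * exp (-(τ k * z))) (-∑ k ∈ s, τ k * α k) 0 := by
  rw [← sum_neg_distrib]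
  refine HasDerivAt.fun_sum fun k _ => ?_
  simpa [mul_comm] using (((hasDerivAt_id (0 : ℂ)).const_mul (τ k)).fun_neg.cexp).const_mul (α k)

/-- The boundary locus of the explicit scheme `u(t + δt) = u(t) + ∑ α_k δt F(u(t - τ_k δt))`, in the
exponential variable: `u(t) = e^{z t / δt}` solves the scheme for `F(u) = λ u` exactly when
`λ δt = boundaryLocus s α τ z` (where the denominator does not vanish). The boundary of the von
Neumann stability domain is parameterized by `z = iθ`, and the Adams–Bashforth delays are
`τ_k = k`. -/
noncomputable def boundaryLocus (α τ : ι → ℂ) (z : ℂ) : ℂ :=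
  (exp z - 1) / ∑ k ∈ s, α k * exp (-(τ k * z))

theorem boundaryLocus_eq_mul_dslope_exp_div (α τ : ι → ℂ) (z : ℂ) :
    boundaryLocus s α τ z = z * (dslope exp 0 z / ∑ k ∈ s, α k * exp (-(τ k * z))) := by
  have h : z * dslope exp 0 z = exp z - 1 := by simpa using sub_smul_dslope exp 0 z
  rw [boundaryLocus, ← h, mul_div_assoc]

theorem boundaryLocus_sub_quadratic_isLittleO {α : ι → ℂ} (τ : ι → ℂ) (hα : ∑ k ∈ s, α k ≠ 0) :
    (fun z => boundaryLocus s α τ z - ((∑ k ∈ s, α k)⁻¹ * z +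
        (∑ k ∈ s, τ k * α k + (∑ k ∈ s, α k) / 2) / (∑ k ∈ s, α k) ^ 2 * z ^ 2))
      =o[𝓝 0] fun z => z ^ 2 := by
  have hquot := hasDerivAt_dslope_exp_zero.div (hasDerivAt_sum_mul_exp_neg_mul_zero s α τ)
    (by simpa using hα)
  refine (isLittleO_sub_smul_sub_quadratic hquot).congr (fun z => ?_) fun z => by rw [sub_zero]
  simp only [boundaryLocus_eq_mul_dslope_exp_div, Pi.div_apply, dslope_same, Complex.deriv_exp,
    exp_zero, mul_zero, neg_zero, sub_zero, mul_one, smul_eq_mul]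
  ring

theorem adams_bashforth_boundary_tangency_general {α : ι → ℝ} (τ : ι → ℝ)
    (hα : ∑ k ∈ s, α k ≠ 0) :
    (fun θ : ℝ => (boundaryLocus s (fun k => α k) (fun k => τ k) (I * θ)).re +
        (∑ k ∈ s, τ k * α k + (∑ k ∈ s, α k) / 2) / (∑ k ∈ s, α k) ^ 2 * θ ^ 2)
      =o[𝓝 0] fun θ : ℝ => θ ^ 2 := by
  have hI : Tendsto (fun θ : ℝ => I * (θ : ℂ)) (𝓝 0) (𝓝 0) :=
    Continuous.tendsto' (by fun_prop) _ _ (by simp)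
  have hζ := (boundaryLocus_sub_quadratic_isLittleO s (α := fun k => α k) (fun k => τ k)
    (by exact_mod_cast hα)).comp_tendsto hI
  have hre (w : ℂ) (a b θ : ℝ) :
      w.re + b * θ ^ 2 = (w - (a * (I * θ) + b * (I * θ) ^ 2)).re := by
    rw [sub_re, re_quadratic_I_mul, sub_neg_eq_add]
  refine (IsBigO.trans_isLittleO (.of_bound' (.of_forall fun θ => ?_)) hζ).trans_isBigO
    (.of_bound' (.of_forall fun θ => by simp))
  rw [hre _ (∑ k ∈ s, α k)⁻¹, Real.norm_eq_abs]
  exact_mod_cast abs_re_le_norm _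

end BoundaryLocus

/-- Tangency of the Adams–Bashforth stability-domain boundary to the imaginary axis:
for a consistent scheme (`∑ α_k = 1`), the boundary curve
`ζ(θ) = (e^{iθ} - 1)/(∑ α_k e^{-ikθ})` satisfies
`Re ζ(θ) = -(Υ₁ + 1/2) θ² + o(θ²)` as `θ → 0`, where `Υ₁ = ∑ k α_k`. -/
theorem adams_bashforth_boundary_tangency
    (K : ℕ) (α : ℕ → ℝ) (hcons : ∑ k ∈ range (K + 1), α k = 1)
    (Υ₁ : ℝ) (hΥ : Υ₁ = ∑ k ∈ range (K + 1), (k : ℝ) * α k) :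
    (fun θ : ℝ =>
        ((Complex.exp (Complex.I * θ) - 1) /
            (∑ k ∈ range (K + 1), (α k : ℂ) * Complex.exp (-(Complex.I * k * θ)))).re
          + (Υ₁ + 1 / 2) * θ ^ 2)
      =o[𝓝 (0 : ℝ)] fun θ : ℝ => θ ^ 2 := by
  subst hΥ
  simpa [boundaryLocus, hcons, mul_assoc, mul_left_comm] using
    adams_bashforth_boundary_tangency_general (range (K + 1)) (α := α) (fun k => k)
      (hcons ▸ one_ne_zero)
end
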